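/- Let (Ω, 𝓕, P) be a probability space, let X_t : Ω → ℝ (t ∈ ℕ) be random variables each of which is almost everywhere strongly measurable, in L²(P), and mean zero (∫ X_t dP = 0), let g : ℕ → ℝ be a nonnegative summable sequence such that |cov(X_s, X_t)| ≤ g(dist(s,t)) for all s, t ∈ ℕ, and let c : ℕ → ℝ be weights with |c_t| ≤ 1 for all t. Then the sequence of sample averages ω ↦ (1/N)·Σ_{t=0}^{N−1} c_t·X_t(ω) converges to 0 in measure (in probability) with respect to P as N → ∞. -/

import Mathlib

open MeasureTheory Finset Filter

/-- The covariance of two real random variables `f` and `g` under `P`: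
`∫ (f − E[f])·(g − E[g]) dP`. -/
noncomputable def cov {Ω : Type*} [MeasurableSpace Ω] (P : Measure Ω)
    (f g : Ω → ℝ) : ℝ :=
  ∫ ω, (f ω - ∫ x, f x ∂P) * (g ω - ∫ x, g x ∂P) ∂P

theorem aux_sum_le (g : ℕ → ℝ) (hg0 : ∀ n, 0 ≤ g n) (hgsum : Summable g) (s N : ℕ) :
    ∑ t ∈ Finset.range N, g (Nat.dist s t) ≤ 2 * ∑' n, g n := by
  have key : ∀ A : Finset ℕ, Set.InjOn (Nat.dist s) A →
      ∑ t ∈ A, g (Nat.dist s t) ≤ ∑' n, g n := by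
    intro A hA
    rw [← Finset.sum_image (f := g) (g := Nat.dist s) hA]
    exact hgsum.sum_le_tsum _ (fun i _ => hg0 i)
  rw [← Finset.sum_filter_add_sum_filter_not (Finset.range N) (fun t => t ≤ s)]
  have h1 := key ((Finset.range N).filter (fun t => t ≤ s)) (by
    intro a ha b hb hab
    simp [Nat.dist] at ha hb hab
    omega)
  have h2 := key ((Finset.range N).filter (fun t => ¬ t ≤ s)) (by
    intro a ha b hb hab
    simp [Nat.dist] at ha hb hab
    omega)
  linarith

theorem aux_var {Ω : Type*} [MeasurableSpace Ω]
    (P : Measure Ω) [IsProbabilityMeasure P]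
    (X : ℕ → Ω → ℝ)
    (hL2 : ∀ t, MemLp (X t) 2 P)
    (g : ℕ → ℝ) (hg0 : ∀ n, 0 ≤ g n) (hgsum : Summable g)
    (hcov : ∀ s t : ℕ, |cov P (X s) (X t)| ≤ g (Nat.dist s t))
    (c : ℕ → ℝ) (hc : ∀ t, |c t| ≤ 1) (N : ℕ) :
    ProbabilityTheory.variance (fun ω => ∑ t ∈ Finset.range N, c t * X t ω) P
      ≤ N * (2 * ∑' n, g n) := by
  rw [ProbabilityTheory.variance_fun_sum' (fun t _ => (hL2 t).const_mul (c t))]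
  calc _ ≤ ∑ s ∈ Finset.range N, ∑ t ∈ Finset.range N, g (Nat.dist s t) := by
        refine Finset.sum_le_sum fun s _ => Finset.sum_le_sum fun t _ => ?_
        rw [ProbabilityTheory.covariance_const_mul_left,
          ProbabilityTheory.covariance_const_mul_right]
        have h := hcov s t
        change |ProbabilityTheory.covariance (X s) (X t) P| ≤ _ at h
        refine (le_abs_self _).trans (le_trans ?_ h)
        rw [abs_mul, abs_mul, ← mul_assoc]
        exact mul_le_of_le_one_left (abs_nonneg _)
          (mul_le_one₀ (hc s) (abs_nonneg _) (hc t))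
    _ ≤ ∑ s ∈ Finset.range N, (2 * ∑' n, g n) :=
        Finset.sum_le_sum fun s _ => aux_sum_le g hg0 hgsum s N
    _ = _ := by simp

theorem tendstoInMeasure_weighted_average {Ω : Type*} [MeasurableSpace Ω]
    (P : Measure Ω) [IsProbabilityMeasure P]
    (X : ℕ → Ω → ℝ) (hmeas : ∀ t, AEStronglyMeasurable (X t) P)
    (hL2 : ∀ t, MemLp (X t) 2 P) (hmean : ∀ t, ∫ ω, X t ω ∂P = 0)
    (g : ℕ → ℝ) (hg0 : ∀ n, 0 ≤ g n) (hgsum : Summable g)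
    (hcov : ∀ s t : ℕ, |cov P (X s) (X t)| ≤ g (Nat.dist s t))
    (c : ℕ → ℝ) (hc : ∀ t, |c t| ≤ 1) :
    TendstoInMeasure P
      (fun (N : ℕ) (ω : Ω) => (1 / (N : ℝ)) * ∑ t ∈ Finset.range N, c t * X t ω)
      Filter.atTop (fun _ => 0) := by
  have hmem : ∀ N : ℕ, MemLp (fun ω => ∑ t ∈ Finset.range N, c t * X t ω) 2 P := fun N =>
    memLp_finsetSum _ (fun t _ => (hL2 t).const_mul (c t))
  have hint : ∀ N : ℕ, ∫ ω, (1 / (N : ℝ)) * ∑ t ∈ Finset.range N, c t * X t ω ∂P = 0 := by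
    intro N
    rw [integral_const_mul, integral_finset_sum _
      (fun t _ => ((hL2 t).integrable (by norm_num)).const_mul (c t))]
    simp [integral_const_mul, hmean]
  rw [tendstoInMeasure_iff_norm]
  intro ε hε
  have hlim : Tendsto (fun N : ℕ => ENNReal.ofReal ((2 * ∑' n, g n) / ε ^ 2 / (N : ℝ)))
      atTop (nhds 0) := by
    rw [← ENNReal.ofReal_zero]
    exact ENNReal.tendsto_ofReal (tendsto_const_div_atTop_nhds_zero_nat _)
  refine tendsto_of_tendsto_of_tendsto_of_le_of_le' tendsto_const_nhds hlim
    (Eventually.of_forall fun _ => zero_le) ?_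
  filter_upwards [eventually_gt_atTop 0] with N hN
  have hN' : (0 : ℝ) < N := by exact_mod_cast hN
  have hch := ProbabilityTheory.meas_ge_le_variance_div_sq ((hmem N).const_mul (1 / (N : ℝ))) hε
  rw [hint N] at hch
  simp only [Real.norm_eq_abs]
  refine hch.trans (ENNReal.ofReal_le_ofReal ?_)
  rw [ProbabilityTheory.variance_const_mul]
  have hv := aux_var P X hL2 g hg0 hgsum hcov c hc N
  calc _ ≤ (1 / (N : ℝ)) ^ 2 * (N * (2 * ∑' n, g n)) / ε ^ 2 := by gcongr
    _ = _ := by field_simp
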